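/- Let a > 4 and f_a(x) = a·x·(1−x). Assume |f_a'(x)| > 1 for every x ∈ [0,1] with f_a(x) ≤ 1. Then the set Λ = {x ∈ [0,1] : for all n ∈ ℕ, f_a^[n](x) ∈ [0,1]} has no isolated points: every point of Λ is an accumulation point of Λ. -/

import Mathlib

/-- The quadratic (logistic) map. -/
def logisticMap (a : ℝ) : ℝ → ℝ := fun x => a * x * (1 - x)

/-- The points of `[0,1]` whose whole orbit under `logisticMap a` stays in `[0,1]`. -/
def logisticInvariantSet (a : ℝ) : Set ℝ :=
  {x : ℝ | x ∈ Set.Icc (0 : ℝ) 1 ∧ ∀ n : ℕ, (logisticMap a)^[n] x ∈ Set.Icc (0 : ℝ) 1}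

theorem mem_logisticInvariantSet_of_map_mem {a x : ℝ} (hx : x ∈ Set.Icc (0 : ℝ) 1)
    (h : logisticMap a x ∈ logisticInvariantSet a) : x ∈ logisticInvariantSet a := by
  refine ⟨hx, fun n => ?_⟩
  cases n with
  | zero => exact hx
  | succ n => exact h.2 n

theorem map_mem_logisticInvariantSet {a x : ℝ} (h : x ∈ logisticInvariantSet a) :
    logisticMap a x ∈ logisticInvariantSet a :=
  ⟨h.2 1, fun n => h.2 (n + 1)⟩

theorem zero_mem_logisticInvariantSet (a : ℝ) : (0 : ℝ) ∈ logisticInvariantSet a := by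
  have h0 : logisticMap a 0 = 0 := by simp [logisticMap]
  refine ⟨by simp, fun n => ?_⟩
  rw [Function.iterate_fixed h0]
  simp

theorem one_mem_logisticInvariantSet (a : ℝ) : (1 : ℝ) ∈ logisticInvariantSet a := by
  refine mem_logisticInvariantSet_of_map_mem (by simp) ?_
  simpa [logisticMap] using zero_mem_logisticInvariantSet a

theorem logisticMap_one_sub (a x : ℝ) : logisticMap a (1 - x) = logisticMap a x := by
  simp only [logisticMap]
  ring

theorem deriv_logisticMap (a x : ℝ) : deriv (logisticMap a) x = a * (1 - 2 * x) := by
  have h : HasDerivAt (logisticMap a) (a * 1 * (1 - x) + a * x * (-1)) x :=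
    ((hasDerivAt_id x).const_mul a).mul ((hasDerivAt_id x).const_sub 1)
  rw [h.deriv]
  ring

/-- Near a point of the left half of `[0,1]` whose image lies below `1`, the left inverse branch
of `logisticMap a` contracts by the factor `a * √(1 - 4 / a)`. -/
theorem exists_logisticMap_eq_of_le_half {a p q : ℝ} (ha : 4 < a) (hp : p ≤ 1 / 2)
    (hfp : logisticMap a p ≤ 1) (hq : q ∈ Set.Icc (0 : ℝ) 1) :
    ∃ x ∈ Set.Icc (0 : ℝ) 1, logisticMap a x = q ∧
      a * √(1 - 4 / a) * |x - p| ≤ |q - logisticMap a p| := by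
  have ha0 : 0 < a := by linarith
  have hqa : 4 * q / a ≤ 4 / a := by gcongr; linarith [hq.2]
  have hqa0 : 0 ≤ 4 * q / a := div_nonneg (by linarith [hq.1]) ha0.le
  have h4a : 4 / a ≤ 1 := by rw [div_le_one ha0]; exact ha.le
  set s := √(1 - 4 * q / a)
  have hs2 : s ^ 2 = 1 - 4 * q / a := Real.sq_sqrt (by linarith)
  have hs0 : 0 ≤ s := Real.sqrt_nonneg _
  have hs1 : s ≤ 1 := Real.sqrt_le_one.mpr (by linarith)
  have hrs : √(1 - 4 / a) ≤ s := Real.sqrt_le_sqrt (by linarith)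
  have hrp : √(1 - 4 / a) ≤ 1 - 2 * p := by
    refine Real.sqrt_le_iff.mpr ⟨by linarith, ?_⟩
    have h : 4 * logisticMap a p / a ≤ 4 / a := by gcongr; linarith
    have h' : 4 * logisticMap a p / a = 4 * p * (1 - p) := by
      simp only [logisticMap]
      field_simp
    linarith [h' ▸ h]
  have hfx : logisticMap a ((1 - s) / 2) = q := by
    have : logisticMap a ((1 - s) / 2) = a * (1 - s ^ 2) / 4 := by
      simp only [logisticMap]
      ring
    rw [this, hs2]
    field_simp
    ring
  refine ⟨(1 - s) / 2, ⟨by linarith, by linarith⟩, hfx, ?_⟩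
  have hdiff : q - logisticMap a p = a * (1 - p - (1 - s) / 2) * ((1 - s) / 2 - p) := by
    rw [← hfx]
    simp only [logisticMap]
    ring
  have hr0 : 0 ≤ √(1 - 4 / a) := Real.sqrt_nonneg _
  have hr : √(1 - 4 / a) ≤ 1 - p - (1 - s) / 2 := by linarith
  rw [hdiff, abs_mul, abs_of_nonneg (mul_nonneg ha0.le (hr0.trans hr))]
  gcongr

theorem exists_logisticMap_eq {a p q : ℝ} (ha : 4 < a)
    (hfp : logisticMap a p ≤ 1) (hq : q ∈ Set.Icc (0 : ℝ) 1) :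
    ∃ x ∈ Set.Icc (0 : ℝ) 1, logisticMap a x = q ∧
      a * √(1 - 4 / a) * |x - p| ≤ |q - logisticMap a p| := by
  rcases le_total p (1 / 2) with hp | hp
  · exact exists_logisticMap_eq_of_le_half ha hp hfp hq
  · obtain ⟨x, hx, hfx, hle⟩ := exists_logisticMap_eq_of_le_half (p := 1 - p) ha (by linarith)
      (by rwa [logisticMap_one_sub]) hq
    refine ⟨1 - x, ⟨by linarith [hx.2], by linarith [hx.1]⟩, by rwa [logisticMap_one_sub], ?_⟩
    rw [logisticMap_one_sub] at hle
    rwa [show 1 - x - p = -(x - (1 - p)) by ring, abs_neg]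

theorem exists_iterate_logisticMap_eq {a q : ℝ} (ha : 4 < a) (hq : q ∈ logisticInvariantSet a)
    (n : ℕ) : ∀ p ∈ logisticInvariantSet a, ∃ x ∈ logisticInvariantSet a,
      (logisticMap a)^[n] x = q ∧
        (a * √(1 - 4 / a)) ^ n * |x - p| ≤ |q - (logisticMap a)^[n] p| := by
  have ha0 : 0 < a := by linarith
  induction n with
  | zero => exact fun p _ => ⟨q, hq, rfl, by simp⟩
  | succ n ih =>
    intro p hp
    obtain ⟨y, hy, hyq, hyle⟩ := ih _ (map_mem_logisticInvariantSet hp)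
    obtain ⟨x, hx, hxy, hxle⟩ := exists_logisticMap_eq (p := p) ha (hp.2 1).2 hy.1
    refine ⟨x, mem_logisticInvariantSet_of_map_mem hx (hxy ▸ hy), ?_, ?_⟩
    · rw [Function.iterate_succ_apply, hxy, hyq]
    · rw [Function.iterate_succ_apply, pow_succ, mul_assoc]
      exact (mul_le_mul_of_nonneg_left hxle (by positivity)).trans hyle

theorem one_lt_mul_sqrt_of_one_lt_abs_deriv {a : ℝ} (ha : 4 < a)
    (hderiv : ∀ x ∈ Set.Icc (0 : ℝ) 1, logisticMap a x ≤ 1 → 1 < |deriv (logisticMap a) x|) :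
    1 < a * √(1 - 4 / a) := by
  have ha0 : 0 < a := by linarith
  obtain ⟨x, hx, hfx, -⟩ := exists_logisticMap_eq_of_le_half (p := 0) (q := 1) ha (by norm_num)
    (by simp [logisticMap]) (by simp)
  have h := hderiv x hx hfx.le
  have hsq : (1 - 2 * x) ^ 2 = 1 - 4 / a := by
    simp only [logisticMap] at hfx
    field_simp
    linear_combination (-4) * hfx
  rwa [deriv_logisticMap, abs_mul, abs_of_pos ha0, ← Real.sqrt_sq_eq_abs, hsq] at h

/-- For `a > 4`, if `|f_a'(x)| > 1` for every `x ∈ [0,1]` with `f_a x ≤ 1`, then every point of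
`Λ = {x ∈ [0,1] : ∀ n, f_a^[n] x ∈ [0,1]}` is an accumulation point of `Λ`. -/
theorem logistic_invariant_set_perfect (a : ℝ) (ha : 4 < a)
    (hderiv : ∀ x ∈ Set.Icc (0 : ℝ) 1, logisticMap a x ≤ 1 → 1 < |deriv (logisticMap a) x|) :
    ∀ p ∈ {x : ℝ | x ∈ Set.Icc (0 : ℝ) 1 ∧ ∀ n : ℕ,
        (logisticMap a)^[n] x ∈ Set.Icc (0 : ℝ) 1},
      AccPt p (Filter.principal {x : ℝ | x ∈ Set.Icc (0 : ℝ) 1 ∧ ∀ n : ℕ,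
        (logisticMap a)^[n] x ∈ Set.Icc (0 : ℝ) 1}) := by
  intro p hp
  change AccPt p (Filter.principal (logisticInvariantSet a))
  have hL := one_lt_mul_sqrt_of_one_lt_abs_deriv ha hderiv
  rw [accPt_iff_nhds]
  intro U hU
  obtain ⟨ε, hε, hball⟩ := Metric.mem_nhds_iff.mp hU
  obtain ⟨n, hn⟩ := pow_unbounded_of_one_lt (1 / ε) hL
  obtain ⟨q, hq, hne⟩ : ∃ q ∈ logisticInvariantSet a, q ≠ (logisticMap a)^[n] p := by
    by_cases h : (0 : ℝ) = (logisticMap a)^[n] p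
    · exact ⟨1, one_mem_logisticInvariantSet a, h ▸ one_ne_zero⟩
    · exact ⟨0, zero_mem_logisticInvariantSet a, h⟩
  obtain ⟨x, hx, hxq, hle⟩ := exists_iterate_logisticMap_eq ha hq n p hp
  refine ⟨x, ⟨hball ?_, hx⟩, fun h => hne (by rw [← hxq, h])⟩
  rw [Metric.mem_ball, Real.dist_eq]
  have h1 : |q - (logisticMap a)^[n] p| ≤ 1 :=
    abs_sub_le_iff.mpr ⟨by linarith [hq.1.2, (hp.2 n).1], by linarith [hq.1.1, (hp.2 n).2]⟩
  by_contra! hge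
  rw [div_lt_iff₀ hε] at hn
  have : (a * √(1 - 4 / a)) ^ n * ε ≤ (a * √(1 - 4 / a)) ^ n * |x - p| := by gcongr
  linarith
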